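/- Let X be a finite type of variables, let R be a binary relation on integer valuations X → ℤ, and let P be a finite set of polynomials in MvPolynomial X ℚ such that every p ∈ P satisfies: for all x, y with R x y, p(y) ≤ p(x) and 0 ≤ p(x) (evaluating at integer points cast into ℚ). If R has an infinite execution, then the restricted relation R' defined by R' x y ↔ (R x y ∧ ∀ p ∈ P, p(x) = p(y)) also has an infinite execution. More precisely, for any infinite execution f of R there exists N such that for all i ≥ N and all p ∈ P, p(f i) = p(f (i+1)). -/

import Mathlib

theorem denom_bound {X : Type*} (p : MvPolynomial X ℚ) :
    ∃ D : ℕ, 0 < D ∧ ∀ x : X → ℤ, ∃ z : ℤ,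
      (D : ℚ) * MvPolynomial.aeval (fun i => (x i : ℚ)) p = z := by
  induction p using MvPolynomial.induction_on with
  | C a =>
    refine ⟨a.den, a.den_pos, fun x => ⟨a.num, ?_⟩⟩
    simp [Rat.den_mul_eq_num]
  | add p q hp hq =>
    obtain ⟨D, hD, h⟩ := hp
    obtain ⟨E, hE, k⟩ := hq
    refine ⟨D * E, Nat.mul_pos hD hE, fun x => ?_⟩
    obtain ⟨z, hz⟩ := h x
    obtain ⟨w, hw⟩ := k x
    refine ⟨E * z + D * w, ?_⟩
    rw [map_add]
    push_cast
    rw [← hz, ← hw]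
    ring
  | mul_X p n hp =>
    obtain ⟨D, hD, h⟩ := hp
    refine ⟨D, hD, fun x => ?_⟩
    obtain ⟨z, hz⟩ := h x
    refine ⟨z * x n, ?_⟩
    rw [map_mul, MvPolynomial.aeval_X]
    push_cast
    rw [← hz]
    ring

theorem seq_stab (u : ℕ → ℚ) (D : ℕ) (hD : 0 < D) (hz : ∀ i, ∃ z : ℤ, (D : ℚ) * u i = z)
    (hu : ∀ i, u (i + 1) ≤ u i) (h0 : ∀ i, 0 ≤ u i) :
    ∃ N, ∀ i ≥ N, u i = u (i + 1) := by
  have hD' : (0 : ℚ) < D := by exact_mod_cast hD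
  have hn : ∀ i, ∃ n : ℕ, (D : ℚ) * u i = n := by
    intro i
    obtain ⟨z, h⟩ := hz i
    have : (0 : ℚ) ≤ z := h ▸ mul_nonneg hD'.le (h0 i)
    have hz0 : 0 ≤ z := by exact_mod_cast this
    lift z to ℕ using hz0
    exact ⟨z, by simpa using h⟩
  choose n hn using hn
  have ha : Antitone u := antitone_nat_of_succ_le hu
  obtain ⟨N, hN⟩ : ∃ N, ∀ i, n N ≤ n i := by
    obtain ⟨N, -, hN⟩ := (measure n).wf.has_min Set.univ ⟨0, trivial⟩
    exact ⟨N, fun i => not_lt.mp (hN i trivial)⟩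
  have key : ∀ i ≥ N, u i = u N := by
    intro i hi
    refine le_antisymm (ha hi) ?_
    have : (n N : ℚ) ≤ n i := by exact_mod_cast hN i
    rw [← hn, ← hn] at this
    exact le_of_mul_le_mul_left this hD'
  exact ⟨N, fun i hi => by rw [key i hi, key (i + 1) (by omega)]⟩

/-- Stabilization of finitely many quasi-ranking functions along infinite integer
executions: if every member of the finite set `P` is a quasi-ranking function for `R`,
then (a) whenever `R` has an infinite execution, so does the restriction of `R` to
transitions preserving every `p ∈ P`; and (b) more precisely, along any infinite
execution of `R` the values of all `p ∈ P` are eventually constant. -/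
theorem quasi_rf_stabilization
    {X : Type*} [Fintype X]
    (R : (X → ℤ) → (X → ℤ) → Prop)
    (P : Finset (MvPolynomial X ℚ))
    (hq : ∀ p ∈ P, ∀ x y : X → ℤ, R x y →
      MvPolynomial.aeval (fun i => (y i : ℚ)) p ≤ MvPolynomial.aeval (fun i => (x i : ℚ)) p ∧
      0 ≤ MvPolynomial.aeval (fun i => (x i : ℚ)) p) :
    ((∃ f : ℕ → (X → ℤ), ∀ i : ℕ, R (f i) (f (i + 1))) →
      ∃ g : ℕ → (X → ℤ), ∀ i : ℕ,
        R (g i) (g (i + 1)) ∧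
        ∀ p ∈ P, MvPolynomial.aeval (fun j => ((g i) j : ℚ)) p =
          MvPolynomial.aeval (fun j => ((g (i + 1)) j : ℚ)) p) ∧
    (∀ f : ℕ → (X → ℤ), (∀ i : ℕ, R (f i) (f (i + 1))) →
      ∃ N : ℕ, ∀ i ≥ N, ∀ p ∈ P,
        MvPolynomial.aeval (fun j => ((f i) j : ℚ)) p =
          MvPolynomial.aeval (fun j => ((f (i + 1)) j : ℚ)) p) := by
  have main : ∀ f : ℕ → (X → ℤ), (∀ i : ℕ, R (f i) (f (i + 1))) →
      ∃ N : ℕ, ∀ i ≥ N, ∀ p ∈ P,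
        MvPolynomial.aeval (fun j => ((f i) j : ℚ)) p =
          MvPolynomial.aeval (fun j => ((f (i + 1)) j : ℚ)) p := by
    intro f hf
    have h1 : ∀ p ∈ P, ∀ᶠ i in Filter.atTop,
        MvPolynomial.aeval (fun j => ((f i) j : ℚ)) p =
          MvPolynomial.aeval (fun j => ((f (i + 1)) j : ℚ)) p := by
      intro p hp
      obtain ⟨D, hD, hz⟩ := denom_bound p
      exact Filter.eventually_atTop.mpr
        (seq_stab (fun i => MvPolynomial.aeval (fun j => ((f i) j : ℚ)) p) D hD
          (fun i => hz (f i)) (fun i => (hq p hp _ _ (hf i)).1)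
          (fun i => (hq p hp _ _ (hf i)).2))
    exact Filter.eventually_atTop.mp ((Filter.eventually_all_finset P).mpr h1)
  refine ⟨?_, main⟩
  rintro ⟨f, hf⟩
  obtain ⟨N, hN⟩ := main f hf
  exact ⟨fun i => f (N + i), fun i => ⟨hf (N + i), hN (N + i) (by omega)⟩⟩
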